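/- Let (V, λ) be a nonsingular symmetric bilinear form over ℤ/2 with dim V = n, let q be a ℤ/4-valued quadratic enhancement of λ, and let v ∈ V be a characteristic element for λ. Then (∑_{x∈V} i^{q(x)})² = 2ⁿ · i^{q(v)}. (Equivalently, the Brown–Kervaire invariant satisfies BK(V,λ,q) ≡ q(v) mod 4; this is the algebraic form of Morita's mod-4 signature identity σ ≡ P₂(v) mod 4.) -/

import Mathlib

/-!
Write `χ a = i ^ a` for `a : ℤ/4`, an additive character. Since `2 x = 0` in `V`, the enhancement
property gives `2 q(x) = ι(λ(x,x)) = ι(λ(x,v))`. Expanding the square of the Gauss sum as a double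
sum and substituting `y = x + z`, the exponent becomes

  `q(x) + q(x + z) = 2 q(x) + q(z) + ι(λ(x,z)) = q(z) + ι(λ(x, v + z))`.

For fixed `z` the sum over `x` is the sum of the character `x ↦ (-1) ^ λ(x, v + z)`. By
nonsingularity this character is nontrivial unless `z = v`, so only `z = v` contributes, and it
contributes `|V| · i ^ q(v) = 2ⁿ · i ^ q(v)`.
-/

/-- The additive injection `ℤ/2 → ℤ/4` sending `1` to `2`. -/
def iota : ZMod 2 → ZMod 4 := fun a => 2 * (a.val : ZMod 4)

lemma I_pow_val_add (a b : ZMod 4) :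
    Complex.I ^ (a + b).val = Complex.I ^ a.val * Complex.I ^ b.val := by
  rw [ZMod.val_add, ← pow_add, ← Complex.I_pow_eq_pow_mod]

lemma iota_add (a b : ZMod 2) : iota (a + b) = iota a + iota b := by
  revert a b; unfold iota; decide

lemma iota_neg (a : ZMod 2) : -iota a = iota a := by
  revert a; unfold iota; decide

lemma I_pow_iota_of_ne_zero {a : ZMod 2} (ha : a ≠ 0) : Complex.I ^ (iota a).val = -1 := by
  have h : (iota a).val = 2 := by revert a; unfold iota; decide
  rw [h, Complex.I_sq]

/-- Doubling a `ℤ/4`-valued quadratic enhancement recovers the diagonal of the form. -/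
lemma enhancement_add_self {V : Type*} [AddCommGroup V] [Module (ZMod 2) V]
    (l : V →ₗ[ZMod 2] V →ₗ[ZMod 2] ZMod 2) (q : V → ZMod 4)
    (hq : ∀ x y : V, q (x + y) = q x + q y + iota (l x y)) (x : V) :
    q x + q x = iota (l x x) := by
  have h0 : q 0 = 0 := by
    have h := hq 0 0
    simp only [add_zero, map_zero] at h
    simpa [iota] using h
  have h := hq x x
  rw [ZModModule.add_self, h0] at h
  rw [← iota_neg]
  exact eq_neg_of_add_eq_zero_left h.symm

/-- Orthogonality: the character `x ↦ (-1) ^ λ(x, w)` has zero sum when `w ≠ 0`. -/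
lemma sum_I_pow_iota_eq_zero {V : Type*} [AddCommGroup V] [Module (ZMod 2) V] [Fintype V]
    (l : V →ₗ[ZMod 2] V →ₗ[ZMod 2] ZMod 2) (hsymm : ∀ x y : V, l x y = l y x)
    (hinj : Function.Injective fun x : V => l x) {w : V} (hw : w ≠ 0) :
    ∑ x : V, Complex.I ^ (iota (l x w)).val = 0 := by
  obtain ⟨x₀, hx₀⟩ : ∃ x₀, l x₀ w ≠ 0 := by
    by_contra! h
    refine hw (hinj ?_)
    ext x
    simp [hsymm w x, h x]
  -- Translation by `x₀` permutes `V` and changes the sign of every term.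
  have h := Equiv.sum_comp (Equiv.addRight x₀) fun x : V => Complex.I ^ (iota (l x w)).val
  simp only [Equiv.coe_addRight, map_add, LinearMap.add_apply, iota_add, I_pow_val_add,
    I_pow_iota_of_ne_zero hx₀, mul_neg_one, Finset.sum_neg_distrib] at h
  exact self_eq_neg.mp h.symm

/-- The square of the Gauss sum of a `ℤ/4`-valued quadratic enhancement equals
`2ⁿ · i^{q(v)}` for a characteristic element `v`: the Brown–Kervaire invariant
satisfies `BK(V,λ,q) ≡ q(v) mod 4`. -/
theorem gauss_sum_sq_eq
    {V : Type*} [AddCommGroup V] [Module (ZMod 2) V] [FiniteDimensional (ZMod 2) V]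
    [Fintype V]
    (n : ℕ) (hdim : Module.finrank (ZMod 2) V = n)
    (l : V →ₗ[ZMod 2] V →ₗ[ZMod 2] ZMod 2)
    (hsymm : ∀ x y : V, l x y = l y x)
    (hnonsing : Function.Bijective fun x : V => l x)
    (q : V → ZMod 4)
    (hq : ∀ x y : V, q (x + y) = q x + q y + iota (l x y))
    (v : V) (hv : ∀ x : V, l x x = l x v) :
    (∑ x : V, Complex.I ^ (q x).val) ^ 2 = (2 : ℂ) ^ n * Complex.I ^ (q v).val := by
  have hexp : ∀ x z : V, Complex.I ^ (q x).val * Complex.I ^ (q (x + z)).val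
      = Complex.I ^ (q z).val * Complex.I ^ (iota (l x (v + z))).val := by
    intro x z
    rw [← I_pow_val_add, ← I_pow_val_add, hq, map_add, iota_add, ← hv,
      ← enhancement_add_self l q hq x]
    congr 2
    ring
  calc (∑ x : V, Complex.I ^ (q x).val) ^ 2
      = ∑ x : V, ∑ z : V, Complex.I ^ (q x).val * Complex.I ^ (q (x + z)).val := by
        rw [sq, Finset.sum_mul]
        refine Finset.sum_congr rfl fun x _ => ?_
        rw [← Finset.mul_sum]
        exact congrArg _
          (Equiv.sum_comp (Equiv.addLeft x) fun y : V => Complex.I ^ (q y).val).symm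
    _ = ∑ z : V, Complex.I ^ (q z).val * ∑ x : V, Complex.I ^ (iota (l x (v + z))).val := by
        rw [Finset.sum_comm]
        simp only [hexp, Finset.mul_sum]
    _ = Complex.I ^ (q v).val * ∑ x : V, Complex.I ^ (iota (l x (v + v))).val := by
        refine Finset.sum_eq_single v (fun z _ hz => ?_) (by simp)
        have hw : v + z ≠ 0 := fun h => hz (by
          rw [← sub_eq_zero, ZModModule.sub_eq_add, add_comm, h])
        rw [sum_I_pow_iota_eq_zero l hsymm hnonsing.injective hw, mul_zero]
    _ = (2 : ℂ) ^ n * Complex.I ^ (q v).val := by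
        have hcard : Fintype.card V = 2 ^ n := by
          rw [Module.card_eq_pow_finrank (K := ZMod 2), hdim, ZMod.card]
        simp [ZModModule.add_self, iota, hcard, mul_comm]
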